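/- arXiv:2104.10651 — 2 statements merged into one kernel-verified Lean document; each statement's English description precedes it below -/
import Mathlib

section
/- Let m_b be a mass function on a finite nonempty set Θ with belief function b, and let A ⊆ Θ be nonempty. For each nonempty B ⊆ A let v_B be defined by v_B(B) = m_b(B) + 1 − b(A), v_B(X) = m_b(X) for nonempty X ⊆ A with X ≠ B, and v_B(X) = 0 for X ⊄ A. Then the barycenter (1/(2^{|A|}−1)) Σ_{∅≠B⊆A} v_B of these 2^{|A|} − 1 vertices equals the mass function given by B ↦ m_b(B) + (1 − b(A))/(2^{|A|} − 1) for nonempty B ⊆ A and 0 otherwise, i.e. the unique L_2 conditional mass function of m_b given A. -/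
open Finset

/-- A mass function on the finite frame `Θ`. -/
def IsMassFun {Θ : Type*} [Fintype Θ] [DecidableEq Θ] (m : Finset Θ → ℝ) : Prop :=
  m ∅ = 0 ∧ (∀ B, 0 ≤ m B) ∧ ∑ B : Finset Θ, m B = 1

/-- Belief value `b(A) = ∑_{B ⊆ A} m(B)`. -/
def bel {Θ : Type*} [Fintype Θ] [DecidableEq Θ] (m : Finset Θ → ℝ) (A : Finset Θ) : ℝ :=
  ∑ B ∈ A.powerset, m B

/-- The vertex `v_B` of the `L₁` conditional simplex. -/
def vertexL1 {Θ : Type*} [Fintype Θ] [DecidableEq Θ] (mb : Finset Θ → ℝ) (A B : Finset Θ) :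
    Finset Θ → ℝ :=
  fun X => if X = B then mb B + 1 - bel mb A
           else if X ≠ ∅ ∧ X ⊆ A then mb X else 0

/-- The `L₂` conditional mass function of `mb` given `A`. -/
noncomputable def mL2 {Θ : Type*} [Fintype Θ] [DecidableEq Θ] (mb : Finset Θ → ℝ)
    (A : Finset Θ) : Finset Θ → ℝ :=
  fun B => if B ≠ ∅ ∧ B ⊆ A then mb B + (1 - bel mb A) / ((2 : ℝ) ^ A.card - 1) else 0

/-!
Each vertex is the restriction of `m_b` to the nonempty subsets of `A`, plus the missing mass
`1 - b(A)` placed on the single coordinate `B`. Averaging over `B` leaves the restriction unchanged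
and spreads the missing mass evenly over all `2 ^ |A| - 1` coordinates.
-/

section Barycenter

variable {ι V : Type*} [DecidableEq ι] [AddCommMonoid V]

theorem sum_single_const_eq_indicator (s : Finset ι) (c : V) :
    ∑ i ∈ s, Pi.single i c = (s : Set ι).indicator fun _ : ι => c := by
  ext j
  rw [Finset.sum_apply, Set.indicator_apply]
  exact sum_pi_single j (fun _ => c) s

theorem inv_card_smul_sum_add_single {K : Type*} [DivisionSemiring K] [Module K V]
    {s : Finset ι} (hs : (#s : K) ≠ 0) (f : ι → V) (c : V) :
    (#s : K)⁻¹ • ∑ i ∈ s, (f + Pi.single i c) =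
      f + (s : Set ι).indicator fun _ => (#s : K)⁻¹ • c := by
  rw [sum_add_distrib, sum_const, sum_single_const_eq_indicator, smul_add,
    ← Nat.cast_smul_eq_nsmul K, inv_smul_smul₀ hs]
  exact congrArg (f + ·) (Set.indicator_const_smul _ _ _).symm

end Barycenter

section NonemptySubsets

variable {α : Type*} [DecidableEq α]

/-- The nonempty subsets of `A`: the possible focal elements of a mass function conditioned on
`A`, which index both the vertices and the coordinates of the `L₁` conditional simplex. -/
def nonemptySubsets (A : Finset α) : Finset (Finset α) :=
  A.powerset.filter (fun B => B ≠ ∅)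

theorem mem_nonemptySubsets {A B : Finset α} : B ∈ nonemptySubsets A ↔ B ≠ ∅ ∧ B ⊆ A := by
  rw [nonemptySubsets, mem_filter, mem_powerset, and_comm]

theorem cast_card_nonemptySubsets {R : Type*} [Ring R] (A : Finset α) :
    (#(nonemptySubsets A) : R) = 2 ^ #A - 1 := by
  rw [nonemptySubsets, filter_ne', cast_card_erase_of_mem (empty_mem_powerset A), card_powerset,
    Nat.cast_pow, Nat.cast_ofNat]

theorem nonemptySubsets_nonempty {A : Finset α} (hA : A.Nonempty) : (nonemptySubsets A).Nonempty :=
  ⟨A, mem_nonemptySubsets.2 ⟨hA.ne_empty, Subset.rfl⟩⟩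

end NonemptySubsets

section ConditionalMass

variable {Θ : Type*} [Fintype Θ] [DecidableEq Θ]

theorem vertexL1_eq_indicator_add_single (m : Finset Θ → ℝ) {A B : Finset Θ}
    (hB : B ∈ nonemptySubsets A) :
    vertexL1 m A B =
      (nonemptySubsets A : Set (Finset Θ)).indicator m + Pi.single B (1 - bel m A) := by
  ext X
  rw [vertexL1, Pi.add_apply]
  obtain rfl | hXB := eq_or_ne X B
  · rw [if_pos rfl, Set.indicator_of_mem (mem_coe.2 hB), Pi.single_eq_same, add_sub_assoc]
  · simp only [if_neg hXB, Pi.single_eq_of_ne hXB, add_zero, Set.indicator_apply, mem_coe,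
      mem_nonemptySubsets]

theorem mL2_eq_indicator_add_indicator (m : Finset Θ → ℝ) (A : Finset Θ) :
    mL2 m A =
      (nonemptySubsets A : Set (Finset Θ)).indicator m +
        (nonemptySubsets A : Set (Finset Θ)).indicator
          fun _ => (#(nonemptySubsets A) : ℝ)⁻¹ • (1 - bel m A) := by
  ext X
  rw [mL2, ← Set.indicator_add', Set.indicator_apply]
  simp only [mem_coe, mem_nonemptySubsets, Pi.add_apply, cast_card_nonemptySubsets, smul_eq_mul,
    inv_mul_eq_div]

theorem inv_card_smul_sum_vertexL1 (m : Finset Θ → ℝ) {A : Finset Θ} (hA : A.Nonempty) :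
    (#(nonemptySubsets A) : ℝ)⁻¹ • ∑ B ∈ nonemptySubsets A, vertexL1 m A B = mL2 m A := by
  have card_ne_zero : (#(nonemptySubsets A) : ℝ) ≠ 0 :=
    Nat.cast_ne_zero.2 (nonemptySubsets_nonempty hA).card_ne_zero
  rw [sum_congr rfl fun B hB => vertexL1_eq_indicator_add_single m hB,
    inv_card_smul_sum_add_single card_ne_zero, mL2_eq_indicator_add_indicator]

theorem stmt6_general (m : Finset Θ → ℝ) {A : Finset Θ} (hA : A.Nonempty) (X : Finset Θ) :
    (1 / ((2 : ℝ) ^ #A - 1)) * ∑ B ∈ A.powerset.filter (fun B => B ≠ ∅), vertexL1 m A B X =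
      mL2 m A X := by
  rw [← inv_card_smul_sum_vertexL1 m hA, Pi.smul_apply, Finset.sum_apply, smul_eq_mul,
    cast_card_nonemptySubsets, one_div, nonemptySubsets]

end ConditionalMass

/-- the barycenter `(1/(2^{|A|}-1)) ∑_{∅≠B⊆A} v_B` of the `2^{|A|} - 1` vertices
of the `L₁` conditional simplex equals the `L₂` conditional mass function of `mb` given `A`. -/
theorem stmt6 {Θ : Type*} [Fintype Θ] [DecidableEq Θ] [Nonempty Θ]
    (mb : Finset Θ → ℝ) (hmb : IsMassFun mb)
    (A : Finset Θ) (hA : A.Nonempty) :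
    ∀ X : Finset Θ,
      (1 / ((2 : ℝ) ^ A.card - 1)) *
          ∑ B ∈ A.powerset.filter (fun B => B ≠ ∅), vertexL1 mb A B X = mL2 mb A X :=
  stmt6_general mb hA
end

section
/- Let m_b be a mass function on a finite nonempty set Θ with belief function b, and let A ⊆ Θ be nonempty. Then the L_2 conditional mass function of m_b given A, namely B ↦ m_b(B) + (1 − b(A))/(2^{|A|} − 1) for nonempty B ⊆ A and 0 for B ⊄ A, is itself a mass function: all its values are nonnegative and they sum to 1; hence it belongs to the conditioning simplex M_A. -/
/-!
The mass `1 - b(A)` that `mb` leaves outside the subsets of `A` is nonnegative, and the `L₂`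
conditional mass function shares it out equally among the `2 ^ |A| - 1` nonempty subsets of `A`:
no value there decreases, and their total rises from `b(A)` to `1`.
-/

open Finset

/-- The conditioning simplex `M_A`: mass functions supported on nonempty subsets of `A`. -/
def condSimplex {Θ : Type*} [Fintype Θ] [DecidableEq Θ] (A : Finset Θ) :
    Set (Finset Θ → ℝ) :=
  {m | IsMassFun m ∧ ∀ B : Finset Θ, ¬(B ≠ ∅ ∧ B ⊆ A) → m B = 0}

theorem sum_add_sub_sum_div_card {ι K : Type*} [DivisionRing K] [CharZero K] {s : Finset ι}
    (hs : s.Nonempty) (f : ι → K) (c : K) :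
    ∑ i ∈ s, (f i + (c - ∑ j ∈ s, f j) / #s) = c := by
  have hcard : (#s : K) ≠ 0 := Nat.cast_ne_zero.mpr hs.card_ne_zero
  rw [sum_add_distrib, sum_const, nsmul_eq_mul, (Nat.cast_commute _ _).eq,
    div_mul_cancel₀ _ hcard, add_sub_cancel]

theorem cast_card_powerset_erase_empty {α R : Type*} [DecidableEq α] [Ring R] (A : Finset α) :
    (#(A.powerset.erase ∅) : R) = 2 ^ #A - 1 := by
  rw [cast_card_erase_of_mem (empty_mem_powerset A), card_powerset, Nat.cast_pow, Nat.cast_ofNat]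

theorem powerset_erase_empty_nonempty {α : Type*} [DecidableEq α] {A : Finset α}
    (hA : A.Nonempty) : (A.powerset.erase ∅).Nonempty :=
  ⟨A, mem_erase_of_ne_of_mem hA.ne_empty (mem_powerset_self A)⟩

section Conditioning

variable {Θ : Type*} [Fintype Θ] [DecidableEq Θ] {m : Finset Θ → ℝ} {A B : Finset Θ}

theorem IsMassFun.bel_le_one (hm : IsMassFun m) (A : Finset Θ) : bel m A ≤ 1 :=
  hm.2.2 ▸ sum_le_sum_of_subset_of_nonneg (subset_univ _) fun B _ _ ↦ hm.2.1 B

theorem mL2_of_ne_empty_of_subset (hB : B ≠ ∅) (hBA : B ⊆ A) :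
    mL2 m A B = m B + (1 - bel m A) / (2 ^ #A - 1) :=
  if_pos ⟨hB, hBA⟩

theorem mL2_eq_zero (hB : ¬(B ≠ ∅ ∧ B ⊆ A)) : mL2 m A B = 0 :=
  if_neg hB

theorem mL2_nonneg (hnonneg : ∀ B ⊆ A, 0 ≤ m B) (hbel : bel m A ≤ 1) (B : Finset Θ) :
    0 ≤ mL2 m A B := by
  by_cases hB : B ≠ ∅ ∧ B ⊆ A
  · have hden : (0 : ℝ) ≤ 2 ^ #A - 1 := sub_nonneg.mpr (one_le_pow₀ one_le_two)
    rw [mL2_of_ne_empty_of_subset hB.1 hB.2]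
    exact add_nonneg (hnonneg B hB.2) (div_nonneg (sub_nonneg.mpr hbel) hden)
  · exact (mL2_eq_zero hB).ge

theorem sum_mL2 (hempty : m ∅ = 0) (hA : A.Nonempty) : ∑ B, mL2 m A B = 1 := by
  have hbel : bel m A = ∑ B ∈ A.powerset.erase ∅, m B := (sum_erase _ hempty).symm
  calc
    ∑ B, mL2 m A B = ∑ B ∈ A.powerset.erase ∅, mL2 m A B :=
      (sum_subset (subset_univ _) fun B _ hB ↦
        mL2_eq_zero fun h ↦ hB (mem_erase.mpr ⟨h.1, mem_powerset.mpr h.2⟩)).symm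
    _ = ∑ B ∈ A.powerset.erase ∅,
          (m B + (1 - ∑ C ∈ A.powerset.erase ∅, m C) / #(A.powerset.erase ∅)) := by
      refine sum_congr rfl fun B hB ↦ ?_
      obtain ⟨hne, hBA⟩ := mem_erase.mp hB
      rw [mL2_of_ne_empty_of_subset hne (mem_powerset.mp hBA), hbel,
        cast_card_powerset_erase_empty]
    _ = 1 := sum_add_sub_sum_div_card (powerset_erase_empty_nonempty hA) m 1

theorem stmt17_general (hempty : m ∅ = 0) (hnonneg : ∀ B ⊆ A, 0 ≤ m B) (hbel : bel m A ≤ 1)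
    (hA : A.Nonempty) : mL2 m A ∈ condSimplex A :=
  ⟨⟨mL2_eq_zero fun h ↦ h.1 rfl, mL2_nonneg hnonneg hbel, sum_mL2 hempty hA⟩,
    fun _ ↦ mL2_eq_zero⟩

end Conditioning

/-- the `L₂` conditional mass function of `mb` given a nonempty `A` is itself a
mass function: its values are nonnegative and sum to `1`; hence it belongs to the
conditioning simplex `M_A`. -/
theorem stmt17 {Θ : Type*} [Fintype Θ] [DecidableEq Θ] [Nonempty Θ]
    (mb : Finset Θ → ℝ) (hmb : IsMassFun mb)
    (A : Finset Θ) (hA : A.Nonempty) :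
    (∀ B : Finset Θ, 0 ≤ mL2 mb A B) ∧
    (∑ B : Finset Θ, mL2 mb A B = 1) ∧
    mL2 mb A ∈ condSimplex A := by
  have hmem := stmt17_general hmb.1 (fun B _ ↦ hmb.2.1 B) (hmb.bel_le_one A) hA
  exact ⟨hmem.1.2.1, hmem.1.2.2, hmem⟩
end
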